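/- arXiv:2603.03895 — 2 statements merged into one kernel-verified Lean document; each statement's English description precedes it below -/
import Mathlib

section
/- Let N ≥ 1, let ν_0, …, ν_{N−1} be strictly positive reals, and let S > 0. Define P_n* := S · √(ν_n) / (Σ_{m=0}^{N−1} √(ν_m)). Then P* is feasible (P_n* > 0 and Σ_n P_n* = S) and for every strictly positive P_0, …, P_{N−1} with Σ_{n=0}^{N−1} P_n = S, one has Σ_{n=0}^{N−1} ν_n / P_n ≥ Σ_{n=0}^{N−1} ν_n / P_n* = (Σ_{m=0}^{N−1} √(ν_m))² / S, with equality if and only if P_n = P_n* for all n. -/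
open Finset

/-- RF-optimal power allocation: `P* n = S √(ν n) / Σ_m √(ν m)` is
feasible and uniquely minimizes `Σ_n ν n / P n` over strictly positive allocations
summing to `S`, with optimal value `(Σ_m √(ν m))² / S`. -/
theorem rf_optimal_power_allocation
    (N : ℕ) (hN : 1 ≤ N) (ν : Fin N → ℝ) (hν : ∀ n, 0 < ν n)
    (S : ℝ) (hS : 0 < S)
    (Pstar : Fin N → ℝ)
    (hPstar : ∀ n, Pstar n = S * Real.sqrt (ν n) / ∑ m : Fin N, Real.sqrt (ν m)) :
    (∀ n, 0 < Pstar n) ∧ (∑ n : Fin N, Pstar n = S) ∧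
    (∑ n : Fin N, ν n / Pstar n = (∑ m : Fin N, Real.sqrt (ν m)) ^ 2 / S) ∧
    ∀ P : Fin N → ℝ, (∀ n, 0 < P n) → (∑ n : Fin N, P n = S) →
      (∑ n : Fin N, ν n / P n ≥ ∑ n : Fin N, ν n / Pstar n
        ∧ (∑ n : Fin N, ν n / P n = ∑ n : Fin N, ν n / Pstar n ↔
            ∀ n, P n = Pstar n)) := by
  have hne : (univ : Finset (Fin N)).Nonempty := ⟨⟨0, hN⟩, mem_univ _⟩
  have hT : 0 < ∑ m : Fin N, Real.sqrt (ν m) :=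
    sum_pos (fun n _ => Real.sqrt_pos.2 (hν n)) hne
  generalize hTd : ∑ m : Fin N, Real.sqrt (ν m) = T at *
  have hpos : ∀ n, 0 < Pstar n := fun n => by
    have := Real.sqrt_pos.2 (hν n)
    rw [hPstar]; positivity
  have hsum : ∑ n : Fin N, Pstar n = S := by
    simp only [hPstar]
    rw [← sum_div, ← mul_sum, hTd]
    field_simp
  have hnu : ∀ n, ν n = (T / S) ^ 2 * Pstar n ^ 2 := fun n => by
    have h := Real.sq_sqrt (hν n).le
    rw [hPstar]
    field_simp
    exact h.symm
  have hval : ∑ n : Fin N, ν n / Pstar n = T ^ 2 / S := by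
    have : ∀ n, ν n / Pstar n = (T / S) ^ 2 * Pstar n := fun n => by
      have := (hpos n).ne'
      rw [hnu n]
      field_simp
    simp only [this]
    rw [← mul_sum, hsum]
    field_simp
  refine ⟨hpos, hsum, hval, fun P hP hPS => ?_⟩
  have key : ∑ n : Fin N, ν n / P n = ∑ n : Fin N, ν n / Pstar n
      + ∑ n : Fin N, (T / S) ^ 2 * (P n - Pstar n) ^ 2 / P n := by
    have h1 : ∀ n, ν n / P n = ν n / Pstar n + (T / S) ^ 2 * (P n - Pstar n) ^ 2 / P n
        + (T / S) ^ 2 * (Pstar n - P n) := fun n => by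
      have := (hpos n).ne'
      have := (hP n).ne'
      rw [hnu n]
      field_simp
      ring
    rw [sum_congr rfl fun n _ => h1 n, sum_add_distrib, sum_add_distrib, ← mul_sum,
      sum_sub_distrib, hsum, hPS]
    ring
  have hnn : ∀ n ∈ (univ : Finset (Fin N)), 0 ≤ (T / S) ^ 2 * (P n - Pstar n) ^ 2 / P n :=
    fun n _ => by
      have := hP n
      positivity
  refine ⟨?_, ?_, ?_⟩
  · have := sum_nonneg hnn
    linarith
  · intro h n
    have h0 : ∑ n : Fin N, (T / S) ^ 2 * (P n - Pstar n) ^ 2 / P n = 0 := by linarith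
    have h2 := (sum_eq_zero_iff_of_nonneg hnn).1 h0 n (mem_univ n)
    have h3 := (hP n).ne'
    have h4 : T / S ≠ 0 := (div_pos hT hS).ne'
    have h5 : (P n - Pstar n) ^ 2 = 0 := by
      rcases div_eq_zero_iff.1 h2 with h | h
      · exact (mul_eq_zero.1 h).resolve_left (pow_ne_zero 2 h4)
      · exact absurd h h3
    exact sub_eq_zero.1 (pow_eq_zero_iff (two_ne_zero)|>.1 h5)
  · intro h
    simp only [h]
end

section
/- Let J ≥ 1 and fix reals P_1, …, P_J, R_1, …, R_J, P_ave and R_min. Consider the polytope F := { η ∈ ℝ^J : η_j ≥ 0 for all j, Σ_{j=1}^J η_j = 1, Σ_{j=1}^J η_j·P_j = P_ave, Σ_{j=1}^J η_j·R_j ≥ R_min }. Then every extreme point η* of F at which the rate constraint is inactive, i.e. Σ_{j=1}^J η_j*·R_j > R_min, has at most two nonzero coordinates. -/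
open Finset
open scoped Classical

/-- refinement of Theorem 3: every extreme point of the feasible
polytope at which the rate constraint is inactive has at most two nonzero
coordinates. -/
theorem extreme_point_inactive_rate_at_most_two_constellations
    (J : ℕ) (hJ : 1 ≤ J) (P R : Fin J → ℝ) (Pave Rmin : ℝ)
    (F : Set (Fin J → ℝ))
    (hF : F = {η : Fin J → ℝ |
      (∀ j, 0 ≤ η j) ∧ (∑ j : Fin J, η j = 1) ∧
      (∑ j : Fin J, η j * P j = Pave) ∧ (∑ j : Fin J, η j * R j ≥ Rmin)})
    (η : Fin J → ℝ) (hη : η ∈ Set.extremePoints ℝ F)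
    (hrate : ∑ j : Fin J, η j * R j > Rmin) :
    (Finset.univ.filter (fun j => η j ≠ 0)).card ≤ 2 := by
  by_contra hcard
  push Not at hcard
  obtain ⟨a, b, c, ha, hb, hc, hab, hac, hbc⟩ := Finset.two_lt_card_iff.mp hcard
  simp only [Finset.mem_filter, Finset.mem_univ, true_and] at ha hb hc
  have hηF := hη.1
  rw [hF] at hηF
  obtain ⟨h0, h1, hP, -⟩ := hηF
  have ha' := lt_of_le_of_ne (h0 a) (Ne.symm ha)
  have hb' := lt_of_le_of_ne (h0 b) (Ne.symm hb)
  have hc' := lt_of_le_of_ne (h0 c) (Ne.symm hc)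
  -- a direction on the three coordinates preserving both equalities
  obtain ⟨x, y, z, hs, hp, hne⟩ : ∃ x y z : ℝ, x + y + z = 0 ∧
      x * P a + y * P b + z * P c = 0 ∧ ¬ (x = 0 ∧ y = 0 ∧ z = 0) := by
    by_cases h : P b - P c = 0 ∧ P c - P a = 0 ∧ P a - P b = 0
    · refine ⟨1, -1, 0, by ring, by linarith [h.2.2], by simp⟩
    · exact ⟨P b - P c, P c - P a, P a - P b, by ring, by ring, h⟩
  set d : Fin J → ℝ := Pi.single a x + Pi.single b y + Pi.single c z with hd
  have hsum : ∀ Q : Fin J → ℝ, ∑ j, d j * Q j = x * Q a + y * Q b + z * Q c := by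
    intro Q
    simp [hd, add_mul, Finset.sum_add_distrib, Pi.single_apply]
  have hd1 : ∑ j, d j = 0 := by
    have := hsum (fun _ => 1)
    simp only [mul_one] at this
    linarith
  have hdP : ∑ j, d j * P j = 0 := by rw [hsum]; exact hp
  have hda : d a = x := by simp [hd, hab, hac]
  have hdb : d b = y := by simp [hd, hab.symm, hbc]
  have hdc : d c = z := by simp [hd, hac.symm, hbc.symm]
  have hdo : ∀ j, j ≠ a → j ≠ b → j ≠ c → d j = 0 := by
    intro j h1 h2 h3
    simp [hd, h1, h2, h3]
  have small : ∀ t m : ℝ, 0 < m → ∀ᶠ e in nhdsWithin (0 : ℝ) (Set.Ioi 0), e * |t| < m := by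
    intro t m hm
    have hcont : Filter.Tendsto (fun e : ℝ => e * |t|) (nhds 0) (nhds (0 * |t|)) :=
      (continuous_id.mul continuous_const).tendsto 0
    rw [zero_mul] at hcont
    exact (hcont.mono_left nhdsWithin_le_nhds).eventually_lt_const hm
  obtain ⟨e, hea, heb, hec, heR, he⟩ := ((small x _ ha').and ((small y _ hb').and
    ((small z _ hc').and ((small (∑ j, d j * R j) _ (sub_pos.mpr hrate)).and
      self_mem_nhdsWithin)))).exists
  have he : 0 < e := he
  have habs : ∀ j, |e * d j| ≤ η j := by
    intro j
    rw [abs_mul, abs_of_pos he]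
    by_cases h1 : j = a
    · subst h1; rw [hda]; exact hea.le
    by_cases h2 : j = b
    · subst h2; rw [hdb]; exact heb.le
    by_cases h3 : j = c
    · subst h3; rw [hdc]; exact hec.le
    rw [hdo j h1 h2 h3]; simpa using h0 j
  have hmem : ∀ s : ℝ, |s| = e → η + s • d ∈ F := by
    intro s hse
    have hlin : ∀ Q : Fin J → ℝ, ∑ j, (η + s • d) j * Q j
        = ∑ j, η j * Q j + s * ∑ j, d j * Q j := by
      intro Q
      rw [Finset.mul_sum, ← Finset.sum_add_distrib]
      refine Finset.sum_congr rfl fun j _ => ?_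
      simp only [Pi.add_apply, Pi.smul_apply, smul_eq_mul]
      ring
    rw [hF]
    refine ⟨fun j => ?_, ?_, ?_, ?_⟩
    · have := habs j
      rw [abs_mul, abs_of_pos he, ← hse, ← abs_mul] at this
      have := (abs_le.mp (this)).1
      simp only [Pi.add_apply, Pi.smul_apply, smul_eq_mul]
      linarith
    · have := hlin (fun _ => 1)
      simp only [mul_one] at this
      rw [this, h1, hd1]; ring
    · rw [hlin, hP, hdP]; ring
    · rw [hlin]
      rw [← hse, ← abs_mul] at heR
      have := (abs_lt.mp heR).1
      linarith
  have hplus := hmem e (abs_of_pos he)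
  have hminus := hmem (-e) (by rw [abs_neg, abs_of_pos he])
  have hseg : η ∈ openSegment ℝ (η + e • d) (η + (-e) • d) := by
    refine ⟨1 / 2, 1 / 2, by norm_num, by norm_num, by norm_num, ?_⟩
    ext j
    simp only [Pi.add_apply, Pi.smul_apply, smul_eq_mul]
    ring
  have heq := hη.2 hplus hminus hseg
  have hz : ∀ j, d j = 0 := by
    intro j
    have := congrFun heq j
    simp only [Pi.add_apply, Pi.smul_apply, smul_eq_mul] at this
    have h2 : e * d j = 0 := by linarith
    exact (mul_eq_zero.mp h2).resolve_left he.ne'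
  exact hne ⟨hda ▸ hz a, hdb ▸ hz b, hdc ▸ hz c⟩
end
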